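/- Let H be the additive subgroup of ℚ generated by {1/p : p an odd prime}. Then there is no cellular exact sequence 0 → F → G → H → 0 of abelian groups in which the kernel F is a nonzero free abelian group. -/

import Mathlib

/-!
Write `F` for the kernel and suppose `π : G → H` is a cellular cover. Fix a basis vector `b` of `F`
with dual coordinate `φ : F → ℤ`, and `e : G` with `π e = 1`. As `ℚ` is injective, `φ` extends to
`θ : G → ℚ` with `θ e = 0`. Since every element of `H` has an odd squarefree denominator, and
conversely every rational with such a denominator is in `H`, the map `θ` takes values in `H`; hence
it lifts to some `Ψ : G → G` with `π ∘ Ψ = θ`.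

For an odd prime `q` choose `g_q` with `π g_q = 1/q`; then `q g_q = e + f_q` with `f_q ∈ F`. Put
`m_q = φ f_q`. The map `θ - m_q π` vanishes at `g_q`, and this makes it divisible by `q` in
`Hom(G, H)`. By uniqueness of lifts, `Ψ - m_q` is divisible by `q` in `End G`. Evaluating at `b`,
and writing `Ψ b = e + l` with `l ∈ F`, gives `l ≡ f_q + m_q b` modulo `q F`, so
`φ l ≡ 2 m_q` modulo `q`, where `φ l` does not depend on `q`.

Therefore `2 θ - (φ l) π` is integral on `F` and on every `g_q`, hence on all of `G`. It is a
homomorphism `G → ℤ` with value `2` at `b`, and multiplying it by `b` gives a nonzero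
endomorphism of `G` with image in `F`, contradicting the uniqueness of lifts of `0`.
-/

namespace FreeKernelCover

/-- The additive subgroup of `ℚ` generated by the `1 / p` for odd primes `p`. -/
abbrev oddRecip : AddSubgroup ℚ :=
  AddSubgroup.closure {x : ℚ | ∃ p : ℕ, p.Prime ∧ p ≠ 2 ∧ x = 1 / (p : ℚ)}

theorem one_div_mem {p : ℕ} (hp : p.Prime) (h2 : p ≠ 2) : (1 / (p : ℚ)) ∈ oddRecip :=
  AddSubgroup.subset_closure ⟨p, hp, h2, rfl⟩

theorem one_mem : (1 : ℚ) ∈ oddRecip := by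
  have h := oddRecip.nsmul_mem (one_div_mem Nat.prime_three (by norm_num)) 3
  norm_num at h
  exact h

/-- Partial fractions: a rational whose denominator divides a product of distinct odd primes is
an integral combination of the reciprocals of those primes. -/
theorem mem_of_prod_mul (s : Finset ℕ) (hs : ∀ p ∈ s, p.Prime ∧ p ≠ 2) (x : ℚ) (a : ℤ)
    (hx : ((∏ p ∈ s, p : ℕ) : ℚ) * x = a) : x ∈ oddRecip := by
  induction s using Finset.induction_on generalizing x a with
  | empty =>
    have h : x = a • (1 : ℚ) := by simpa using hx
    rw [h]
    exact oddRecip.zsmul_mem one_mem a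
  | insert p s hps ih =>
    have hp := hs p (Finset.mem_insert_self p s)
    have hs' : ∀ r ∈ s, r.Prime ∧ r ≠ 2 := fun r hr => hs r (Finset.mem_insert_of_mem hr)
    rw [Finset.prod_insert hps] at hx
    set M := ∏ r ∈ s, r with hM
    have hcop : Nat.Coprime p M := Nat.Coprime.prod_right fun r hr =>
      (Nat.coprime_primes hp.1 (hs' r hr).1).2 (fun h => hps (h ▸ hr))
    obtain ⟨u, v, huv⟩ := (Nat.isCoprime_iff_coprime.2 hcop)
    have hp0 : (p : ℚ) ≠ 0 := by exact_mod_cast hp.1.ne_zero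
    have huv' : (u : ℚ) * p + v * M = 1 := by exact_mod_cast huv
    push_cast at hx
    -- `x = u p x + v M x`, where `M (u p x) = u a` and `v M x = v a / p`
    have h1 : (u : ℚ) * p * x ∈ oddRecip := by
      refine ih hs' _ (u * a) ?_
      push_cast
      rw [← hx]; ring
    have h2 : (v : ℚ) * M * x ∈ oddRecip := by
      have h := oddRecip.zsmul_mem (one_div_mem hp.1 hp.2) (v * a)
      convert h using 1
      rw [zsmul_eq_mul]
      push_cast
      rw [← hx]
      field_simp
    have h := oddRecip.add_mem h1 h2
    rwa [← add_mul, huv', one_mul] at h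

theorem exists_prod_mul {x : ℚ} (hx : x ∈ oddRecip) :
    ∃ s : Finset ℕ, (∀ p ∈ s, p.Prime ∧ p ≠ 2) ∧ ∃ a : ℤ, ((∏ p ∈ s, p : ℕ) : ℚ) * x = a := by
  induction hx using AddSubgroup.closure_induction with
  | mem x hx =>
    obtain ⟨p, hp, h2, rfl⟩ := hx
    have hp0 : (p : ℚ) ≠ 0 := by exact_mod_cast hp.ne_zero
    exact ⟨{p}, by simp [hp, h2], 1, by simp [hp0]⟩
  | zero => exact ⟨∅, by simp, 0, by simp⟩
  | add x y _ _ hx hy =>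
    obtain ⟨s, hs, a, ha⟩ := hx
    obtain ⟨t, ht, c, hc⟩ := hy
    refine ⟨s ∪ t, fun p hp => (Finset.mem_union.1 hp).elim (hs p) (ht p), ?_⟩
    obtain ⟨k, hk⟩ := Finset.prod_dvd_prod_of_subset s (s ∪ t) (fun p => p)
      Finset.subset_union_left
    obtain ⟨l, hl⟩ := Finset.prod_dvd_prod_of_subset t (s ∪ t) (fun p => p)
      Finset.subset_union_right
    refine ⟨k * a + l * c, ?_⟩
    rw [mul_add]
    nth_rewrite 1 [hk]
    rw [hl]
    push_cast at ha hc ⊢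
    rw [← ha, ← hc]; ring
  | neg x _ hx =>
    obtain ⟨s, hs, a, ha⟩ := hx
    exact ⟨s, hs, -a, by push_cast at ha ⊢; rw [mul_neg, ha]⟩

/-- Given an odd prime `q`, the denominator of an element of `H` divides some `n * q` such that
every rational with denominator dividing `n * q` is in `H`. The witness `n` is a product of
distinct odd primes other than `q`. -/
theorem exists_mul_prime {q : ℕ} (hq : q.Prime) (h2 : q ≠ 2) {x : ℚ} (hx : x ∈ oddRecip) :
    ∃ (n : ℕ) (a : ℤ), (n : ℚ) * q * x = a ∧
      ∀ (y : ℚ) (c : ℤ), (n : ℚ) * q * y = c → y ∈ oddRecip := by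
  obtain ⟨s, hs, a, ha⟩ := exists_prod_mul hx
  have hins : ∏ p ∈ insert q s, p = (∏ p ∈ s.erase q, p) * q := by
    have hset : insert q s = insert q (s.erase q) := by
      ext p
      by_cases h : p = q <;> simp [h]
    rw [hset, Finset.prod_insert (Finset.notMem_erase q s), mul_comm]
  refine ⟨∏ p ∈ s.erase q, p, ?_⟩
  obtain ⟨k, hk⟩ := Finset.prod_dvd_prod_of_subset s (insert q s) (fun p => p)
    (Finset.subset_insert q s)
  refine ⟨k * a, ?_, fun y c hy => ?_⟩
  · rw [← Nat.cast_mul, ← hins, hk]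
    push_cast at ha ⊢
    rw [← ha]; ring
  · refine mem_of_prod_mul (insert q s) ?_ y c ?_
    · intro p hp
      rcases Finset.mem_insert.1 hp with rfl | hp
      · exact ⟨hq, h2⟩
      · exact hs p hp
    · rw [hins, Nat.cast_mul, hy]

section Cover

variable {F G : Type} [AddCommGroup F] [AddCommGroup G] {ι : F →+ G} {π : G →+ oddRecip}

theorem exists_preimage (hex : ι.range = π.ker) {g : G} (hg : (π g : ℚ) = 0) :
    ∃ f, ι f = g := by
  have h : g ∈ π.ker := Subtype.ext hg
  rw [← hex] at h
  exact h

theorem coe_pi_iota (hex : ι.range = π.ker) (f : F) : (π (ι f) : ℚ) = 0 := by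
  have h : ι f ∈ π.ker := hex ▸ ⟨f, rfl⟩
  rw [AddMonoidHom.mem_ker.1 h]
  rfl

/-- If `θ : G → ℚ` is integral on `F` and vanishes at a lift `g₀` of `1 / q`, then
`θ / q` takes values in `H`. -/
theorem div_mem (hex : ι.range = π.ker) {q : ℕ} (hq : q.Prime) (h2 : q ≠ 2)
    (θ : G →+ ℚ) (φ : F → ℤ) (hθ : ∀ f, θ (ι f) = φ f) {g₀ : G}
    (hg₀ : (π g₀ : ℚ) = 1 / q) (h0 : θ g₀ = 0) (g : G) : θ g / q ∈ oddRecip := by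
  have hq0 : (q : ℚ) ≠ 0 := by exact_mod_cast hq.ne_zero
  obtain ⟨n, a, ha, hmem⟩ := exists_mul_prime hq h2 (π g).2
  obtain ⟨f, hf⟩ := exists_preimage (g := n • g - a • g₀) hex (by
    simp only [map_sub, map_nsmul, map_zsmul, AddSubgroup.coe_sub, AddSubgroup.coe_nsmul,
      AddSubgroup.coe_zsmul, nsmul_eq_mul, zsmul_eq_mul, hg₀, ← ha]
    field_simp
    ring)
  refine hmem _ (φ f) ?_
  rw [← hθ, hf]
  simp only [map_sub, map_nsmul, map_zsmul, h0, nsmul_eq_mul, smul_zero, sub_zero]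
  field_simp

theorem exists_lift (hsurj : Function.Surjective fun ψ : G →+ G => π.comp ψ)
    (θ : G →+ ℚ) (hθ : ∀ g, θ g ∈ oddRecip) : ∃ Ψ : G →+ G, ∀ g, (π (Ψ g) : ℚ) = θ g := by
  obtain ⟨Ψ, hΨ⟩ := hsurj (θ.codRestrict oddRecip hθ)
  exact ⟨Ψ, fun g => congrArg Subtype.val (DFunLike.congr_fun hΨ g)⟩

theorem hom_ext (hinj : Function.Injective fun ψ : G →+ G => π.comp ψ) {Ψ Ψ' : G →+ G}
    (h : ∀ g, (π (Ψ g) : ℚ) = π (Ψ' g)) : Ψ = Ψ' :=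
  hinj (AddMonoidHom.ext fun g => Subtype.ext (h g))

theorem not_cover [Module.Free ℤ F] [Nontrivial F] (hι : Function.Injective ι)
    (hπ : Function.Surjective π) (hex : ι.range = π.ker)
    (hinj : Function.Injective fun ψ : G →+ G => π.comp ψ)
    (hsurj : Function.Surjective fun ψ : G →+ G => π.comp ψ) : False := by
  classical
  obtain ⟨b, φ, hb⟩ : ∃ (b : F) (φ : F →+ ℤ), φ b = 1 := by
    let B := Module.Free.chooseBasis ℤ F
    obtain ⟨i⟩ := B.index_nonempty
    exact ⟨B i, (B.coord i).toAddMonoidHom, by simp⟩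
  have hιπ := coe_pi_iota hex
  obtain ⟨e, he⟩ := hπ ⟨1, one_mem⟩
  have he : (π e : ℚ) = 1 := by rw [he]
  let πQ : G →+ ℚ := oddRecip.subtype.comp π
  have hπQ : ∀ g, πQ g = π g := fun _ => rfl
  obtain ⟨θ₀, hθ₀⟩ := (Module.Baer.of_divisible ℚ).extension_property_addMonoidHom ι hι
    ((Int.castAddHom ℚ).comp φ)
  -- `θ` extends `φ` and vanishes at `e`
  let θ : G →+ ℚ := θ₀ - (AddMonoidHom.mulLeft (θ₀ e)).comp πQ
  have hθdef : ∀ g, θ g = θ₀ g - θ₀ e * π g := fun _ => rfl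
  have hθι : ∀ f, θ (ι f) = φ f := fun f => by
    have h := DFunLike.congr_fun hθ₀ f
    simp only [AddMonoidHom.comp_apply, Int.coe_castAddHom] at h
    rw [hθdef, hιπ, h]; simp
  have hθe : θ e = 0 := by rw [hθdef, he]; ring
  -- Lifts `g_q` of `1 / q` and the integers `m_q = φ f_q`
  have hlift : ∀ q : ℕ, q.Prime → q ≠ 2 → ∃ (g : G) (f : F),
      (π g : ℚ) = 1 / q ∧ q • g = e + ι f ∧
      ∀ x, (θ x - φ f * π x) / q ∈ oddRecip := by
    intro q hq h2
    have hq0 : (q : ℚ) ≠ 0 := by exact_mod_cast hq.ne_zero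
    obtain ⟨g, hg⟩ := hπ ⟨_, one_div_mem hq h2⟩
    have hg : (π g : ℚ) = 1 / q := by rw [hg]
    obtain ⟨f, hf⟩ := exists_preimage (g := q • g - e) hex (by
      simp [hg, he, hq0])
    refine ⟨g, f, hg, by rw [hf]; abel, fun x => ?_⟩
    refine div_mem hex hq h2 (θ - (AddMonoidHom.mulLeft (φ f : ℚ)).comp πQ) φ ?_ hg ?_ x
    · intro f'
      change θ (ι f') - φ f * π (ι f') = _
      rw [hθι, hιπ]; ring
    · change θ g - φ f * π g = 0
      have h : q * θ g = φ f := by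
        have h := congrArg θ hf
        rw [hθι, map_sub, map_nsmul, hθe, nsmul_eq_mul, sub_zero] at h
        exact h.symm
      rw [hg, ← h]; field_simp; ring
  have hθmem : ∀ g, θ g ∈ oddRecip := by
    intro x
    obtain ⟨g, f, -, -, h⟩ := hlift 3 Nat.prime_three (by norm_num)
    have h1 := oddRecip.nsmul_mem (h x) 3
    have h2 := oddRecip.zsmul_mem (π x).2 (φ f)
    have h3 := oddRecip.add_mem h1 h2
    convert h3 using 1
    rw [nsmul_eq_mul, zsmul_eq_mul]
    push_cast
    ring
  obtain ⟨Ψ, hΨ⟩ := exists_lift hsurj θ hθmem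
  obtain ⟨l, hl⟩ := exists_preimage (g := Ψ (ι b) - e) hex (by simp [hΨ, hθι, hb, he])
  have hcongr : ∀ q : ℕ, q.Prime → q ≠ 2 → ∃ (g : G) (z : ℤ), (π g : ℚ) = 1 / q ∧
      2 * θ g - φ l * π g = z := by
    intro q hq h2
    have hq0 : (q : ℚ) ≠ 0 := by exact_mod_cast hq.ne_zero
    obtain ⟨g, f, hg, hf, hmem⟩ := hlift q hq h2
    obtain ⟨Ψ', hΨ'⟩ := exists_lift hsurj
      ((AddMonoidHom.mulLeft ((q : ℚ)⁻¹)).comp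
        (θ - (AddMonoidHom.mulLeft (φ f : ℚ)).comp πQ))
      (fun x => by
        have h := hmem x
        rw [div_eq_inv_mul] at h
        exact h)
    have hΨ' : ∀ x, (π (Ψ' x) : ℚ) = (q : ℚ)⁻¹ * (θ x - φ f * π x) := hΨ'
    have heq : Ψ = q • Ψ' + φ f • AddMonoidHom.id G := by
      refine hom_ext hinj fun x => ?_
      simp only [AddMonoidHom.add_apply, AddMonoidHom.nsmul_apply, AddMonoidHom.zsmul_apply,
        AddMonoidHom.id_apply, map_add, map_nsmul, map_zsmul, AddSubgroup.coe_add,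
        AddSubgroup.coe_nsmul, AddSubgroup.coe_zsmul, nsmul_eq_mul, zsmul_eq_mul, hΨ, hΨ']
      field_simp
      ring
    obtain ⟨r, hr⟩ := exists_preimage (g := Ψ' (ι b) - g) hex (by
      simp [hΨ', hθι, hιπ, hb, hg])
    have hl' : l = f + q • r + φ f • b := by
      apply hι
      have hb' := DFunLike.congr_fun heq (ι b)
      simp only [AddMonoidHom.add_apply, AddMonoidHom.nsmul_apply, AddMonoidHom.zsmul_apply,
        AddMonoidHom.id_apply] at hb'
      rw [map_add, map_add, map_nsmul, map_zsmul, hr, hl, hb', smul_sub, hf]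
      abel
    have hφl : φ l = 2 * φ f + q * φ r := by
      rw [hl', map_add, map_add, map_nsmul, map_zsmul, hb]
      simp only [nsmul_eq_mul, zsmul_eq_mul, Int.cast_id, mul_one]
      ring
    have hθg : q * θ g = φ f := by
      have h := congrArg θ hf
      rwa [map_add, hθι, map_nsmul, hθe, nsmul_eq_mul, zero_add] at h
    refine ⟨g, -φ r, hg, ?_⟩
    rw [hφl, hg]
    push_cast
    rw [← hθg]
    field_simp
    ring
  let χ : G →+ ℚ := (AddMonoidHom.mulLeft (2 : ℚ)).comp θ -
    (AddMonoidHom.mulLeft (φ l : ℚ)).comp πQ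
  have hχ : ∀ g, χ g = 2 * θ g - φ l * π g := fun _ => rfl
  have hχι : ∀ f, χ (ι f) = 2 * φ f := fun f => by rw [hχ, hθι, hιπ]; ring
  -- `χ` is integral on all of `G`, since `G` is generated by `F` and the `g_q`
  have hint : ∀ g, ∃ z : ℤ, (z : ℚ) = χ g := by
    let K : AddSubgroup G := (Int.castAddHom ℚ).range.comap χ
    have hle : oddRecip ≤ K.map πQ := by
      refine (AddSubgroup.closure_le _).2 ?_
      rintro _ ⟨q, hq, h2, rfl⟩
      obtain ⟨g, z, hg, hz⟩ := hcongr q hq h2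
      exact ⟨g, ⟨z, hz.symm⟩, hg⟩
    intro g
    obtain ⟨k, ⟨z, hz⟩, hk⟩ := hle (π g).2
    obtain ⟨f, hf⟩ := exists_preimage (g := g - k) hex (by
      rw [hπQ] at hk
      simp [hk])
    refine ⟨2 * φ f + z, ?_⟩
    have hz : (z : ℚ) = χ k := hz
    have h : g = ι f + k := by rw [hf]; abel
    rw [h, map_add, hχι, ← hz]
    push_cast
    ring
  choose z hz using hint
  let ζ : G →+ ℤ := AddMonoidHom.mk' z fun x y => by
    have h : ((z (x + y) : ℤ) : ℚ) = ((z x + z y : ℤ) : ℚ) := by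
      push_cast
      rw [hz, hz, hz, map_add]
    exact_mod_cast h
  have hζ : ∀ x, ζ x = z x := fun _ => rfl
  have hζb : ζ (ι b) = 2 := by
    have h := hz (ι b)
    rw [hχι, hb] at h
    rw [hζ]
    exact_mod_cast h
  have hzero : (zmultiplesHom G (ι b)).comp ζ = 0 := by
    refine hom_ext hinj fun x => ?_
    simp [hιπ]
  have h := DFunLike.congr_fun hzero (ι b)
  have h2b : ι ((2 : ℤ) • b) = ι 0 := by
    rw [map_zsmul, map_zero]
    simpa [hζb] using h
  have h := congrArg φ (hι h2b)
  rw [map_zsmul, hb, map_zero] at h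
  norm_num at h

end Cover

end FreeKernelCover

/-- Let `H ⊆ ℚ` be the additive subgroup generated by the `1/p` for odd
primes `p`.  Then there is no cellular exact sequence `0 → F → G → H → 0` whose kernel `F`
is a nonzero free abelian group. -/
theorem no_cellular_cover_with_free_kernel (H : AddSubgroup ℚ)
    (hH : H = AddSubgroup.closure {x : ℚ | ∃ p : ℕ, p.Prime ∧ p ≠ 2 ∧ x = 1 / (p : ℚ)}) :
    ¬ ∃ (F G : Type) (_ : AddCommGroup F) (_ : AddCommGroup G)
        (ι : F →+ G) (π : G →+ H),
        Module.Free ℤ F ∧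
        Nontrivial F ∧
        Function.Injective ι ∧
        Function.Surjective π ∧
        ι.range = π.ker ∧
        Function.Bijective (fun φ : G →+ G => π.comp φ) := by
  subst hH
  rintro ⟨F, G, _, _, ι, π, _, _, hι, hπ, hex, hinj, hsurj⟩
  exact FreeKernelCover.not_cover hι hπ hex hinj hsurj
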